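/- Let S_min be the smallest score and β = min over pairs (j,j') with S_j > S_{j'} of S_j/S_{j'} (so β > 1). Let c = ((β+1)/2)^{1/(K-1)} and γ = min{δ, 0.5-δ, (1-δ)(c-1)/(c+1)}. If α > 2^{K-1}(log(K-1) - log γ) / (S_min · min{1, (β-1)/2}), then for all r, j ∈ {1,...,K}, |I_j^r - I_j^{r,α}| ≤ ε_α where ε_α = (K-1) exp(-α S_min min{1, (β-1)/2} / 2^{K-1}). -/

import Mathlib

noncomputable def prodMask {N : ℕ} (S : Fin N → ℝ) (α δ : ℝ) : ℕ → Fin N → ℝ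
  | 0 => fun _ => 1
  | r + 1 => fun j =>
      prodMask S α δ r j *
        (1 - (Real.exp (α * S j * prodMask S α δ r j) /
              ∑ j', Real.exp (α * S j' * prodMask S α δ r j')) - δ)

/-- Smooth rank indicator `I_j^{r+1,α}` (the argument `r : ℕ` is the 0-indexed rank,
so `smoothI S α δ 0 j` is the top-1 indicator `I_j^{1,α}`). -/
noncomputable def smoothI {N : ℕ} (S : Fin N → ℝ) (α δ : ℝ) (r : ℕ) (j : Fin N) : ℝ :=
  Real.exp (α * S j * prodMask S α δ r j) /
    ∑ j', Real.exp (α * S j' * prodMask S α δ r j')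

/-- True rank indicator: `trueI S r j = 1` iff `S j` is the `(r+1)`-th largest score
(0-indexed rank `r`), i.e. exactly `r` scores are strictly larger than `S j`. -/
noncomputable def trueI {N : ℕ} (S : Fin N → ℝ) (r : ℕ) (j : Fin N) : ℝ :=
  if (Finset.univ.filter fun i => S j < S i).card = r then 1 else 0

noncomputable def rkH {N : ℕ} (S : Fin N → ℝ) (j : Fin N) : ℕ :=
  (Finset.univ.filter fun i => S j < S i).card

lemma rkH_lt {N : ℕ} (S : Fin N → ℝ) {i j : Fin N} (h : S i < S j) : rkH S j < rkH S i := by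
  unfold rkH
  apply Finset.card_lt_card
  rw [Finset.ssubset_iff_of_subset]
  · exact ⟨j, by simpa using h, by simp⟩
  · intro t ht
    simp only [Finset.mem_filter, Finset.mem_univ, true_and] at ht ⊢
    exact h.trans ht

lemma rkH_lt_iff {N : ℕ} (S : Fin N → ℝ) {i j : Fin N} :
    rkH S j < rkH S i ↔ S i < S j := by
  refine ⟨fun h => ?_, rkH_lt S⟩
  by_contra hn
  rcases lt_or_eq_of_le (not_lt.mp hn) with h1 | h1
  · have := rkH_lt S h1
    omega
  · unfold rkH at h
    rw [h1] at h
    exact lt_irrefl _ h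

lemma rkH_inj {N : ℕ} (S : Fin N → ℝ) (hinj : Function.Injective S) :
    Function.Injective (rkH S) := by
  intro a b hab
  by_contra hne
  rcases lt_or_gt_of_ne (fun h => hne (hinj h)) with h | h
  · have := rkH_lt S h; omega
  · have := rkH_lt S h; omega

lemma rkH_bound {N : ℕ} (S : Fin N → ℝ) (j : Fin N) : rkH S j < N := by
  unfold rkH
  have h : (Finset.univ.filter fun i => S j < S i).card < (Finset.univ : Finset (Fin N)).card := by
    apply Finset.card_lt_card
    rw [Finset.ssubset_iff_of_subset (Finset.subset_univ _)]
    exact ⟨j, by simp, by simp⟩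
  simpa using h

lemma rkH_surj {N : ℕ} (S : Fin N → ℝ) (hinj : Function.Injective S) (r : ℕ) (hr : r < N) :
    ∃ j, rkH S j = r := by
  have h1 : Function.Injective (fun j : Fin N => (⟨rkH S j, rkH_bound S j⟩ : Fin N)) := by
    intro a b hab
    exact rkH_inj S hinj (by simpa using hab)
  obtain ⟨j, hj⟩ := (Finite.injective_iff_surjective.mp h1) ⟨r, hr⟩
  exact ⟨j, by simpa using hj⟩

lemma pow_chain {N : ℕ} (S : Fin N → ℝ) (hinj : Function.Injective S) (β : ℝ) (hβ : 0 < β)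
    (hr : ∀ a b, S b < S a → S b * β ≤ S a) (j : Fin N) (T : Finset (Fin N)) :
    ∀ x : ℝ, (∀ t ∈ T, S j < S t ∧ S t ≤ x) → S j ≤ x → S j * β ^ T.card ≤ x := by
  classical
  induction T using Finset.induction_on_max_value S with
  | empty => intro x _ h; simpa using h
  | insert a s ha hmax ih =>
    intro x hx _
    have hax := hx a (Finset.mem_insert_self _ _)
    have h1 : S j * β ^ s.card ≤ S a / β := by
      apply ih
      · intro t ht
        refine ⟨(hx t (Finset.mem_insert_of_mem ht)).1, ?_⟩
        rw [le_div_iff₀ hβ]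
        apply hr
        refine lt_of_le_of_ne (hmax t ht) fun h => ?_
        exact ha (hinj h ▸ ht)
      · rw [le_div_iff₀ hβ]
        exact hr _ _ hax.1
    rw [Finset.card_insert_of_notMem ha, pow_succ, ← mul_assoc]
    rw [le_div_iff₀ hβ] at h1
    exact h1.trans hax.2

lemma pow_rank {N : ℕ} (S : Fin N → ℝ) (hinj : Function.Injective S) (β : ℝ) (hβ : 0 < β)
    (hr : ∀ a b, S b < S a → S b * β ≤ S a) (j j0 : Fin N) (h : S j < S j0) :
    S j * β ^ (rkH S j - rkH S j0) ≤ S j0 := by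
  classical
  have h1 : rkH S j - rkH S j0 = ((Finset.univ.filter fun i => S j < S i) \
      (Finset.univ.filter fun i => S j0 < S i)).card := by
    rw [Finset.card_sdiff_of_subset]
    · rfl
    · intro t ht
      simp only [Finset.mem_filter, Finset.mem_univ, true_and] at ht ⊢
      exact h.trans ht
  rw [h1]
  apply pow_chain S hinj β hβ hr
  · intro t ht
    simpa using ht
  · exact h.le

lemma sum_masked {N : ℕ} (S : Fin N → ℝ) (hinj : Function.Injective S) (r : ℕ) :
    (Finset.univ.filter fun j => rkH S j < r).card ≤ r := by
  have := Finset.card_le_card_of_injOn (s := Finset.univ.filter fun j => rkH S j < r)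
    (t := Finset.range r) (rkH S) (by intro x hx; simpa using hx) ((rkH_inj S hinj).injOn)
  simpa using this

lemma geom_leH (q : ℝ) (h0 : 0 ≤ q) (h1 : q < 1) (n : ℕ) :
    ∑ k ∈ Finset.range n, q ^ k ≤ 1 / (1 - q) := by
  rw [le_div_iff₀ (by linarith)]
  have := geom_sum_mul q n
  have := pow_nonneg h0 n
  nlinarith

lemma sum_unmasked {N : ℕ} (S : Fin N → ℝ) (hinj : Function.Injective S) (r : ℕ)
    (q : ℝ) (h0 : 0 ≤ q) (h1 : q < 1) :
    ∑ j ∈ Finset.univ.filter (fun j => r < rkH S j), q ^ (rkH S j - r) ≤ q / (1 - q) := by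
  classical
  have e1 : ∑ j ∈ Finset.univ.filter (fun j => r < rkH S j), q ^ (rkH S j - r)
      = ∑ k ∈ (Finset.univ.filter (fun j => r < rkH S j)).image (fun j => rkH S j - r - 1),
        q ^ (k + 1) := by
    rw [Finset.sum_image]
    · apply Finset.sum_congr rfl
      intro j hj
      simp only [Finset.mem_filter, Finset.mem_univ, true_and] at hj
      congr 1
      omega
    · intro a ha b hb hab
      simp only [Finset.coe_filter, Finset.mem_univ, true_and, Set.mem_ofPred_eq] at ha hb hab
      apply rkH_inj S hinj
      omega
  rw [e1]
  have e2 : ∑ k ∈ (Finset.univ.filter (fun j => r < rkH S j)).image (fun j => rkH S j - r - 1),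
        q ^ (k + 1) ≤ ∑ k ∈ Finset.range N, q ^ (k + 1) := by
    apply Finset.sum_le_sum_of_subset_of_nonneg
    · intro k hk
      simp only [Finset.mem_image, Finset.mem_filter, Finset.mem_univ, true_and] at hk
      obtain ⟨a, ha, rfl⟩ := hk
      have := rkH_bound S a
      simp only [Finset.mem_range]
      omega
    · intro i _ _
      positivity
  refine e2.trans ?_
  simp_rw [pow_succ]
  rw [← Finset.sum_mul]
  have := mul_le_mul_of_nonneg_right (geom_leH q h0 h1 N) h0
  calc _ ≤ _ := this
    _ = _ := by ring

lemma softmax_err {N : ℕ} (x : Fin N → ℝ) (j0 : Fin N) (E : ℝ)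
    (hE : ∑ j ∈ Finset.univ.erase j0, Real.exp (x j - x j0) ≤ E) (j : Fin N) :
    |(if j = j0 then (1 : ℝ) else 0) - Real.exp (x j) / ∑ i, Real.exp (x i)| ≤ E := by
  have hp := Real.exp_pos (x j0)
  have hsum : ∑ i, Real.exp (x i) = Real.exp (x j0) *
      (1 + ∑ j ∈ Finset.univ.erase j0, Real.exp (x j - x j0)) := by
    rw [← Finset.add_sum_erase _ _ (Finset.mem_univ j0), mul_add, Finset.mul_sum, mul_one]
    congr 1
    apply Finset.sum_congr rfl
    intro i _
    rw [← Real.exp_add]; congr 1; ring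
  set Q := ∑ j ∈ Finset.univ.erase j0, Real.exp (x j - x j0) with hQ
  have hQ0 : 0 ≤ Q := Finset.sum_nonneg fun i _ => (Real.exp_pos _).le
  refine le_trans ?_ hE
  rw [hsum]
  by_cases h : j = j0
  · subst h
    have : (1 : ℝ) - Real.exp (x j) / (Real.exp (x j) * (1 + Q)) = Q / (1 + Q) := by
      field_simp
      ring
    rw [if_pos rfl, this, abs_of_nonneg (by positivity)]
    exact div_le_self hQ0 (by linarith)
  · rw [if_neg h, zero_sub, abs_neg, abs_of_nonneg (by positivity)]
    have h1 : Real.exp (x j) / (Real.exp (x j0) * (1 + Q)) = Real.exp (x j - x j0) / (1 + Q) := by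
      rw [Real.exp_sub]; field_simp
    rw [h1]
    have h2 : Real.exp (x j - x j0) ≤ Q :=
      Finset.single_le_sum (f := fun j => Real.exp (x j - x j0))
        (fun i _ => (Real.exp_pos _).le) (Finset.mem_erase.mpr ⟨h, Finset.mem_univ j⟩)
    exact (div_le_self (Real.exp_pos _).le (by linarith)).trans h2

lemma smoothI_nonneg {N : ℕ} (S : Fin N → ℝ) (α δ : ℝ) (r : ℕ) (j : Fin N) :
    0 ≤ smoothI S α δ r j := by
  unfold smoothI
  exact div_nonneg (Real.exp_pos _).le (Finset.sum_nonneg fun i _ => (Real.exp_pos _).le)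

lemma prodMask_succ' {N : ℕ} (S : Fin N → ℝ) (α δ : ℝ) (r : ℕ) (j : Fin N) :
    prodMask S α δ (r + 1) j = prodMask S α δ r j * (1 - smoothI S α δ r j - δ) := rfl

lemma trueI_eq {N : ℕ} (S : Fin N → ℝ) (r : ℕ) (j : Fin N) :
    trueI S r j = if rkH S j = r then 1 else 0 := rfl

lemma mask_bounds {N : ℕ} (S : Fin N → ℝ) (α δ ε : ℝ)
    (h1 : ε ≤ δ) (h2 : 0 ≤ 1 - δ - ε) (r : ℕ) (j : Fin N) :
    (∀ l < r, |trueI S l j - smoothI S α δ l j| ≤ ε) →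
    (r ≤ rkH S j → (1 - δ - ε) ^ r ≤ prodMask S α δ r j ∧ prodMask S α δ r j ≤ (1 - δ) ^ r) ∧
    (rkH S j < r → prodMask S α δ r j ≤ 0) := by
  induction r with
  | zero => intro _; simp [prodMask]
  | succ r ih =>
    intro h
    obtain ⟨ih1, ih2⟩ := ih fun l hl => h l (by omega)
    have hr := h r (by omega)
    have hε : 0 ≤ ε := (abs_nonneg _).trans hr
    have h0 := smoothI_nonneg S α δ r j
    rw [trueI_eq, abs_le] at hr
    rw [prodMask_succ']
    constructor
    · intro hj
      obtain ⟨a, b⟩ := ih1 (by omega)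
      rw [if_neg (by omega)] at hr
      have hp : 0 ≤ (1 - δ - ε) ^ r := pow_nonneg h2 r
      rw [pow_succ, pow_succ]
      constructor
      · exact mul_le_mul a (by linarith) h2 (hp.trans a)
      · exact mul_le_mul b (by linarith) (by linarith) (pow_nonneg (by linarith) r)
    · intro hj
      rcases Nat.lt_or_ge (rkH S j) r with hj' | hj'
      · rw [if_neg (by omega)] at hr
        exact mul_nonpos_of_nonpos_of_nonneg (ih2 hj') (by linarith)
      · rw [if_pos (by omega)] at hr
        exact mul_nonpos_of_nonneg_of_nonpos ((pow_nonneg h2 r).trans (ih1 hj').1) (by linarith)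

lemma half_pow (c : ℝ) (hc : 1 ≤ c) (n r : ℕ) (hr : r ≤ n) :
    ((c + 1) / 2) ^ r ≤ (c ^ n + 1) / 2 := by
  have h1 : ((c + 1) / 2) ^ r ≤ ((c + 1) / 2) ^ n := pow_le_pow_right₀ (by linarith) hr
  refine h1.trans ?_
  clear h1 hr
  induction n with
  | zero => norm_num
  | succ n ih =>
    have h2 : 1 ≤ c ^ n := one_le_pow₀ hc
    rw [pow_succ, pow_succ]
    have := mul_le_mul_of_nonneg_right ih (show 0 ≤ (c + 1) / 2 by linarith)
    nlinarith [mul_nonneg (sub_nonneg.mpr h2) (sub_nonneg.mpr hc)]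

set_option maxHeartbeats 1000000 in
/-- The inductive step, with all quantities abstract. -/
lemma step_sum {N : ℕ} (S : Fin N → ℝ) (hpos : ∀ i, 0 < S i) (hinj : Function.Injective S)
    (β : ℝ) (hβ1 : 1 < β) (hr : ∀ a b, S b < S a → S b * β ≤ S a)
    (Smin : ℝ) (hS0 : 0 < Smin) (hSm : ∀ i, Smin ≤ S i)
    (m : ℝ) (hm0 : 0 < m) (hm1 : m ≤ 1) (hm2 : m ≤ (β - 1) / 2)
    (α t L : ℝ) (hα : 0 < α) (ht : 0 < t) (hL : L = α * Smin * m * t)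
    (hL4 : Real.exp (-L) ≤ 1 / 4)
    (n r : ℕ) (hn : 1 ≤ n) (hrn : r ≤ n) (j0 : Fin N) (hj0 : rkH S j0 = r)
    (P : Fin N → ℝ) (hP0 : t ≤ P j0)
    (hPm : ∀ j, rkH S j < r → P j ≤ 0)
    (hPu : ∀ j, r < rkH S j → P j ≤ (β + 3) / 4 * P j0) :
    ∑ j ∈ Finset.univ.erase j0, Real.exp (α * S j * P j - α * S j0 * P j0)
      ≤ n * Real.exp (-L) := by
  classical
  have hnR : (1 : ℝ) ≤ n := by exact_mod_cast hn
  have hrR : (r : ℝ) ≤ n := by exact_mod_cast hrn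
  have hLpos : 0 < L := by rw [hL]; positivity
  set e := Real.exp (-L) with he
  have he0 : 0 < e := Real.exp_pos _
  -- split
  have hsplit : ∑ j ∈ Finset.univ.erase j0, Real.exp (α * S j * P j - α * S j0 * P j0)
      = ∑ j ∈ Finset.univ.filter (fun j => rkH S j < r), Real.exp (α * S j * P j - α * S j0 * P j0)
      + ∑ j ∈ Finset.univ.filter (fun j => r < rkH S j),
          Real.exp (α * S j * P j - α * S j0 * P j0) := by
    rw [← Finset.sum_union]
    · apply Finset.sum_congr _ fun _ _ => rfl
      ext j
      simp only [Finset.mem_erase, Finset.mem_univ, and_true, Finset.mem_union, Finset.mem_filter,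
        true_and]
      rw [← not_iff_not, not_not, not_or, not_lt, not_lt]
      constructor
      · rintro rfl; omega
      · intro h; apply rkH_inj S hinj; omega
    · rw [Finset.disjoint_filter]; intros; omega
  have hmask : ∀ A : ℝ, α * S j0 * P j0 ≥ A →
      ∑ j ∈ Finset.univ.filter (fun j => rkH S j < r), Real.exp (α * S j * P j - α * S j0 * P j0)
        ≤ n * Real.exp (-A) := by
    intro A hA
    have h1 := Finset.sum_le_card_nsmul (Finset.univ.filter (fun j => rkH S j < r))
      (fun j => Real.exp (α * S j * P j - α * S j0 * P j0)) (Real.exp (-A)) (by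
        intro j hj
        simp only [Finset.mem_filter, Finset.mem_univ, true_and] at hj
        apply Real.exp_le_exp.mpr
        have := mul_nonpos_of_nonneg_of_nonpos (mul_pos hα (hpos j)).le (hPm j hj)
        linarith)
    rw [nsmul_eq_mul] at h1
    refine h1.trans (mul_le_mul_of_nonneg_right ?_ (Real.exp_pos _).le)
    have := sum_masked S hinj r
    have : ((Finset.univ.filter fun j => rkH S j < r).card : ℝ) ≤ r := by exact_mod_cast this
    linarith
  rw [hsplit]
  by_cases hmin : ∃ j, r < rkH S j
  · obtain ⟨j1, hj1⟩ := hmin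
    have hS1 : S j1 < S j0 := (rkH_lt_iff S).mp (by omega)
    have hb : Smin * β ≤ S j0 :=
      (mul_le_mul_of_nonneg_right (hSm j1) (by linarith)).trans (hr _ _ hS1)
    have hM : α * S j0 * P j0 ≥ 3 * L := by
      have h3 : Smin * (3 * m) ≤ S j0 :=
        (mul_le_mul_of_nonneg_left (by linarith) hS0.le).trans hb
      calc 3 * L = α * (Smin * (3 * m)) * t := by rw [hL]; ring
        _ ≤ α * S j0 * P j0 := by
          have := hpos j0
          gcongr
    have hM' := hmask _ hM
    have e3 : Real.exp (-(3 * L)) = e ^ 3 := by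
      rw [he, ← Real.exp_nat_mul]; congr 1; push_cast; ring
    rw [e3] at hM'
    set q := Real.exp (-(3 / 2 * L)) with hq
    have hq0 : 0 < q := Real.exp_pos _
    have hq2 : q ^ 2 = e ^ 3 := by
      rw [← e3, hq, ← Real.exp_nat_mul]; congr 1; push_cast; ring
    have hqe : q ≤ e / 2 := by
      apply le_of_sq_le_sq _ (by positivity)
      rw [hq2]
      nlinarith [sq_nonneg e, pow_pos he0 2]
    have hU : ∑ j ∈ Finset.univ.filter (fun j => r < rkH S j),
          Real.exp (α * S j * P j - α * S j0 * P j0) ≤ q / (1 - q) := by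
      refine le_trans (Finset.sum_le_sum ?_) (sum_unmasked S hinj r q hq0.le (by linarith))
      intro j hj
      simp only [Finset.mem_filter, Finset.mem_univ, true_and] at hj
      have hSj : S j < S j0 := (rkH_lt_iff S).mp (by omega)
      have hk := pow_rank S hinj β (by linarith) hr j j0 hSj
      rw [hj0] at hk
      obtain ⟨k, hk'⟩ : ∃ k, k = rkH S j - r := ⟨_, rfl⟩
      have hk1 : 1 ≤ k := by omega
      rw [← hk'] at hk ⊢
      rw [hq, ← Real.exp_nat_mul]
      apply Real.exp_le_exp.mpr
      have hkR : (1 : ℝ) ≤ k := by exact_mod_cast hk1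
      have hbern : 1 + k * (β - 1) ≤ β ^ k := by
        have := one_add_mul_le_pow (a := β - 1) (by linarith) k
        simpa using this
      have hSjp := hpos j
      have hPj := hPu j hj
      have hP0p : 0 < P j0 := ht.trans_le hP0
      -- gap
      have g1 : S j * P j ≤ S j * ((β + 3) / 4 * P j0) := mul_le_mul_of_nonneg_left hPj hSjp.le
      have g2 : (3 / 2 * k) * m ≤ β ^ k - (β + 3) / 4 := by
        have : (3 / 2 * k) * m ≤ (3 / 2 * k) * ((β - 1) / 2) :=
          mul_le_mul_of_nonneg_left hm2 (by positivity)
        nlinarith [mul_nonneg (sub_nonneg.mpr hkR) (sub_nonneg.mpr hβ1.le)]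
      have g3 : Smin * ((3 / 2 * k) * m) * t ≤ (S j * (β ^ k - (β + 3) / 4)) * P j0 := by
        have := hSm j
        gcongr
        apply mul_nonneg hSjp.le
        exact le_trans (by positivity) g2
      have g4 : (S j * (β ^ k - (β + 3) / 4)) * P j0 ≤ S j0 * P j0 - S j * P j := by
        have := mul_le_mul_of_nonneg_right hk hP0p.le
        nlinarith
      have g5 := mul_le_mul_of_nonneg_left (g3.trans g4) hα.le
      rw [hL]
      nlinarith
    have hq8 : q ≤ 1 / 8 := by linarith
    have hU2 : q / (1 - q) ≤ 4 / 7 * e := by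
      rw [div_le_iff₀ (by linarith)]
      nlinarith
    have : (n : ℝ) * e ^ 3 ≤ n * (e / 16) := by
      apply mul_le_mul_of_nonneg_left _ (by linarith)
      have h16 : e ^ 2 ≤ 1 / 16 := by nlinarith
      calc e ^ 3 = e ^ 2 * e := by ring
        _ ≤ 1 / 16 * e := mul_le_mul_of_nonneg_right h16 he0.le
        _ = e / 16 := by ring
    nlinarith
  · push Not at hmin
    have hz : Finset.univ.filter (fun j => r < rkH S j) = ∅ := by
      ext j; simpa using hmin j
    rw [hz, Finset.sum_empty, add_zero]
    apply hmask
    rw [hL]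
    have h3 : Smin * m ≤ S j0 := by nlinarith [hSm j0]
    have := hpos j0
    calc α * Smin * m * t = α * (Smin * m) * t := by ring
      _ ≤ α * S j0 * P j0 := by gcongr

/-- main approximation theorem.  With `Smin` the smallest score, `β` the
minimal ratio `S j / S j'` over pairs with `S j > S j'`, `c = ((β+1)/2)^(1/(K-1))`,
`γ = min {δ, 0.5 - δ, (1-δ)(c-1)/(c+1)}`, if (C1)
`α > 2^(K-1) (log(K-1) - log γ) / (Smin · min{1, (β-1)/2})` holds, then for all ranks
`r ∈ {1,…,K}` (0-indexed `r < K`) and all `j ∈ {1,…,K}`,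
`|I_j^r - I_j^{r,α}| ≤ ε_α` with `ε_α = (K-1) exp(-α Smin min{1,(β-1)/2} / 2^(K-1))`. -/
theorem smoothI_approx_error {N K : ℕ} (S : Fin N → ℝ)
    (hpos : ∀ i, 0 < S i) (hinj : Function.Injective S)
    (hK : 2 ≤ K) (hKN : K ≤ N)
    (δ : ℝ) (hδ : δ ∈ Set.Ioo (0 : ℝ) 0.5)
    (Smin : ℝ) (hSmin : IsLeast (Set.range S) Smin)
    (β : ℝ) (hβ : IsLeast {x : ℝ | ∃ j j' : Fin N, S j' < S j ∧ x = S j / S j'} β)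
    (c γ : ℝ)
    (hc : c = ((β + 1) / 2) ^ ((1 : ℝ) / ((K : ℝ) - 1)))
    (hγ : γ = min δ (min (0.5 - δ) ((1 - δ) * (c - 1) / (c + 1))))
    (α : ℝ)
    (hC1 : α > 2 ^ (K - 1) * (Real.log ((K : ℝ) - 1) - Real.log γ) /
        (Smin * min 1 ((β - 1) / 2))) :
    ∀ r < K, ∀ j : Fin N, (j : ℕ) < K →
      |trueI S r j - smoothI S α δ r j| ≤
        ((K : ℝ) - 1) * Real.exp (-α * Smin * min 1 ((β - 1) / 2) / 2 ^ (K - 1)) := by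
  have hKR : (2 : ℝ) ≤ K := by exact_mod_cast hK
  obtain ⟨hδ0, hδ1⟩ := hδ
  norm_num at hδ1
  obtain ⟨⟨a, b, hab, hβe⟩, hβl⟩ := hβ
  have hβ1 : 1 < β := by rw [hβe, one_lt_div (hpos b)]; exact hab
  have hrat : ∀ a b, S b < S a → S b * β ≤ S a := by
    intro a b h
    have := hβl ⟨a, b, h, rfl⟩
    rw [le_div_iff₀ (hpos b)] at this
    linarith
  obtain ⟨⟨i0, hi0⟩, hSl⟩ := hSmin
  have hS0 : 0 < Smin := hi0 ▸ hpos i0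
  have hSm : ∀ i, Smin ≤ S i := fun i => hSl ⟨i, rfl⟩
  set m := min 1 ((β - 1) / 2) with hm
  have hm0 : 0 < m := lt_min one_pos (by linarith)
  have hm1 : m ≤ 1 := min_le_left _ _
  have hm2 : m ≤ (β - 1) / 2 := min_le_right _ _
  have hc1 : 1 < c := by
    rw [hc]
    exact Real.one_lt_rpow (by linarith) (by apply one_div_pos.mpr; linarith)
  have hcn : c ^ (K - 1) = (β + 1) / 2 := by
    rw [hc, ← Real.rpow_natCast, ← Real.rpow_mul (by linarith)]
    rw [Nat.cast_sub (by omega), Nat.cast_one, one_div_mul_cancel (by linarith), Real.rpow_one]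
  have hγ0 : 0 < γ := by
    rw [hγ]
    refine lt_min hδ0 (lt_min (by norm_num; linarith) ?_)
    apply div_pos (mul_pos _ _) <;> linarith
  have hγ1 : γ ≤ δ := hγ ▸ min_le_left _ _
  have hγ2 : γ ≤ 1 / 2 - δ := by
    have : γ ≤ 0.5 - δ := hγ ▸ (min_le_right _ _).trans (min_le_left _ _)
    norm_num at this ⊢
    linarith
  have hγ3 : γ ≤ (1 - δ) * (c - 1) / (c + 1) := hγ ▸ (min_le_right _ _).trans (min_le_right _ _)
  clear_value m
  set t : ℝ := (1 / 2) ^ (K - 1) with ht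
  have ht0 : 0 < t := by positivity
  obtain ⟨L, hL⟩ : ∃ L, L = α * Smin * m * t := ⟨_, rfl⟩
  have hLe : -α * Smin * m / 2 ^ (K - 1) = -L := by
    rw [hL, ht, one_div, inv_pow]; ring
  have hLlog : Real.log ((K : ℝ) - 1) - Real.log γ < L := by
    rw [gt_iff_lt, div_lt_iff₀ (by positivity)] at hC1
    have h2 : t * 2 ^ (K - 1) = 1 := by rw [ht, ← mul_pow]; norm_num
    have := mul_lt_mul_of_pos_left hC1 ht0
    rw [← mul_assoc, h2, one_mul] at this
    rw [hL]; linarith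
  have hlogγ : Real.log γ < 0 := Real.log_neg hγ0 (by linarith)
  have hlogK : 0 ≤ Real.log ((K : ℝ) - 1) := Real.log_nonneg (by linarith)
  have hLpos : 0 < L := by linarith
  have hα : 0 < α := by
    by_contra hn
    have : L ≤ 0 := by
      rw [hL, mul_assoc, mul_assoc]
      exact mul_nonpos_of_nonpos_of_nonneg (not_lt.mp hn) (by positivity)
    linarith
  have hεγ : ((K : ℝ) - 1) * Real.exp (-L) < γ := by
    have hk0 : 0 < (K : ℝ) - 1 := by linarith
    calc ((K : ℝ) - 1) * Real.exp (-L)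
        = Real.exp (Real.log ((K : ℝ) - 1) - L) := by
          rw [sub_eq_add_neg (Real.log _), Real.exp_add, Real.exp_log hk0]
      _ < Real.exp (Real.log γ) := Real.exp_lt_exp.mpr (by linarith)
      _ = γ := Real.exp_log hγ0
  have hL4 : Real.exp (-L) ≤ 1 / 4 := by
    have := Real.exp_pos (-L)
    nlinarith
  rw [hLe]
  set ε := ((K : ℝ) - 1) * Real.exp (-L) with hε
  have hε0 : 0 ≤ ε := mul_nonneg (by linarith) (Real.exp_pos _).le
  have main : ∀ r < K, ∀ j : Fin N, |trueI S r j - smoothI S α δ r j| ≤ ε := by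
    intro r
    induction r using Nat.strong_induction_on with
    | _ r ih =>
      intro hrK j
      have hmb := fun j => mask_bounds S α δ ε (by linarith) (by linarith) r j
        (fun l hl => ih l hl (by omega) j)
      obtain ⟨j0, hj0⟩ := rkH_surj S hinj r (by omega)
      have hP0 := ((hmb j0).1 hj0.ge).1
      have hx : 1 - δ ≤ (c + 1) / 2 * (1 - δ - ε) := by
        have : ε ≤ (1 - δ) * (c - 1) / (c + 1) := by linarith
        rw [le_div_iff₀ (by linarith)] at this
        nlinarith
      have hsum := step_sum S hpos hinj β hβ1 hrat Smin hS0 hSm m hm0 hm1 hm2 α t L hα ht0 hL hL4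
        (K - 1) r (by omega) (by omega) j0 hj0 (prodMask S α δ r)
        (by
          refine le_trans ?_ hP0
          calc t ≤ (1 / 2) ^ r := pow_le_pow_of_le_one (by norm_num) (by norm_num) (by omega)
            _ ≤ _ := pow_le_pow_left₀ (by norm_num) (by linarith) r)
        (fun j hj => (hmb j).2 hj)
        (by
          intro j hj
          refine ((hmb j).1 hj.le).2.trans ?_
          have h1 := pow_le_pow_left₀ (by linarith) hx r
          rw [mul_pow] at h1
          have h2 := half_pow c hc1.le (K - 1) r (by omega)
          rw [hcn] at h2
          refine h1.trans (mul_le_mul (by linarith) hP0 (pow_nonneg (by linarith) r) (by linarith)))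
      rw [Nat.cast_sub (by omega), Nat.cast_one] at hsum
      have := softmax_err (fun j => α * S j * prodMask S α δ r j) j0 ε hsum j
      have hiff : trueI S r j = if j = j0 then 1 else 0 := by
        rw [trueI_eq]
        have : rkH S j = r ↔ j = j0 := by
          rw [← hj0]; exact (rkH_inj S hinj).eq_iff
        simp only [this]
      rw [hiff]
      exact this
  intro r hr j _
  exact main r hr j
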